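/- For every integer N ≥ 1, the exceptional-point matching identity Q_BH⁻¹ · H_BH(1) · Q_BH = Q_AO⁻¹ · H_AO · Q_AO holds; i.e. the two exceptional-point Hamiltonians H_BH(1) and H_AO are reduced to one and the same canonical matrix by their respective transition matrices. -/

import Mathlib

/-!
`H_BH(1)` and `H_AO` are the members `ω = i` and `ω = 1` of a family `H_ω`, and `Q_BH` and `Q_AO`
are the corresponding members of a family `Q_ω` (with `N = n + 1`):

* `H_ω` is tridiagonal with diagonal `-ω (n - 2k)`, upper entries `g_k` and lower entries `-ω² g_k`;
* `Q_ω = diag(ω^k √binom(n, k)) · P · diag((-ω)^(n-k) (n-k)!)`.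

For every `ω ≠ 0`, the matrix `Q_ω⁻¹ H_ω Q_ω` is the nilpotent Jordan block `J`. Indeed the left
factor of `Q_ω` removes the square roots and conjugates `H_ω` to `ω K`, where the tridiagonal matrix
`K` has integer entries independent of `ω`. Conjugation by `P` takes `K` to a matrix supported on
the superdiagonal, with entries `-(n - k)`; this is a three-term recurrence for binomial
coefficients. The right factor of `Q_ω` rescales `ω` times that matrix to `J`.
-/

open Matrix Polynomial Finset

/-- off-diagonal coupling `√((N−1−k)(k+1))`. -/
noncomputable def gCoup (N k : ℕ) : ℝ := Real.sqrt (((N - 1 - k) * (k + 1) : ℕ))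

/-- the non-Hermitian Bose–Hubbard Hamiltonian `H_BH(z)`. -/
noncomputable def HBH (N : ℕ) (z : ℂ) : Matrix (Fin N) (Fin N) ℂ :=
  fun k l =>
    if (k : ℕ) = (l : ℕ) then -Complex.I * (((N : ℤ) - 1 - 2 * (k : ℕ) : ℤ) : ℂ) * z
    else if (l : ℕ) = (k : ℕ) + 1 then (gCoup N k : ℂ)
    else if (k : ℕ) = (l : ℕ) + 1 then (gCoup N l : ℂ)
    else 0

/-- the EP limit of the discrete anharmonic-oscillator Hamiltonian `H_AO`. -/
noncomputable def HAO (N : ℕ) : Matrix (Fin N) (Fin N) ℂ :=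
  fun k l =>
    if (k : ℕ) = (l : ℕ) then -(((N : ℤ) - 1 - 2 * (k : ℕ) : ℤ) : ℂ)
    else if (l : ℕ) = (k : ℕ) + 1 then (gCoup N k : ℂ)
    else if (k : ℕ) = (l : ℕ) + 1 then -(gCoup N l : ℂ)
    else 0

/-- the nilpotent Jordan block `J`. -/
noncomputable def Jmat (N : ℕ) : Matrix (Fin N) (Fin N) ℂ :=
  fun k l => if (l : ℕ) = (k : ℕ) + 1 then 1 else 0

/-- the Pascal-triangle matrix `P`. -/
noncomputable def Pmat (N : ℕ) : Matrix (Fin N) (Fin N) ℂ :=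
  fun m q => ((N - 1 - (m : ℕ)).choose (q : ℕ) : ℂ)

/-- the diagonal factor `D` with `D_{k,k} = i^k·√(binom(N−1,k))`. -/
noncomputable def Dmat (N : ℕ) : Matrix (Fin N) (Fin N) ℂ :=
  Matrix.diagonal fun k => Complex.I ^ (k : ℕ) * (Real.sqrt ((N - 1).choose (k : ℕ)) : ℂ)

/-- the diagonal factor `G` with `G_{k,k} = (−i)^{N−1−k}·(N−1−k)!`. -/
noncomputable def Gmat (N : ℕ) : Matrix (Fin N) (Fin N) ℂ :=
  Matrix.diagonal fun k => (-Complex.I) ^ (N - 1 - (k : ℕ)) * ((N - 1 - (k : ℕ)).factorial : ℂ)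

/-- the Bose–Hubbard transition matrix `Q_BH = D·P·G`. -/
noncomputable def QBH (N : ℕ) : Matrix (Fin N) (Fin N) ℂ := Dmat N * Pmat N * Gmat N

/-- the diagonal factor `C` with `C_{k,k} = √(binom(N−1,k))`. -/
noncomputable def Cmat (N : ℕ) : Matrix (Fin N) (Fin N) ℂ :=
  Matrix.diagonal fun k => (Real.sqrt ((N - 1).choose (k : ℕ)) : ℂ)

/-- the diagonal factor `F` with `F_{k,k} = (−1)^{N−1−k}·(N−1−k)!`. -/
noncomputable def Fmat (N : ℕ) : Matrix (Fin N) (Fin N) ℂ :=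
  Matrix.diagonal fun k => (-1 : ℂ) ^ (N - 1 - (k : ℕ)) * ((N - 1 - (k : ℕ)).factorial : ℂ)

/-- the anharmonic-oscillator transition matrix `Q_AO = C·P·F`. -/
noncomputable def QAO (N : ℕ) : Matrix (Fin N) (Fin N) ℂ := Cmat N * Pmat N * Fmat N

/-- `β = −1 + i`. -/
noncomputable def betaC : ℂ := -1 + Complex.I

/-- the diagonal factor `B` with `B_{k,k} = (−β)^{−k}`. -/
noncomputable def Bmat (N : ℕ) : Matrix (Fin N) (Fin N) ℂ :=
  Matrix.diagonal fun k => ((-betaC) ^ (k : ℕ))⁻¹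

/-- the diagonal factor `A` with `A_{k,k} = β^k`. -/
noncomputable def Amat (N : ℕ) : Matrix (Fin N) (Fin N) ℂ :=
  Matrix.diagonal fun k => betaC ^ (k : ℕ)

/-- the upper-triangular real matrix `R` with
`R_{n,n+q} = √(binom(n+q,n)·binom(N−1−n,q))`. -/
noncomputable def Rmat (N : ℕ) : Matrix (Fin N) (Fin N) ℂ :=
  fun n k =>
    if (n : ℕ) ≤ (k : ℕ) then
      (Real.sqrt (((k : ℕ).choose (n : ℕ)) * ((N - 1 - (n : ℕ)).choose ((k : ℕ) - (n : ℕ)))) : ℂ)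
    else 0

/-- the transition-matrix product `S = B·R·A`. -/
noncomputable def Smat (N : ℕ) : Matrix (Fin N) (Fin N) ℂ := Bmat N * Rmat N * Amat N

/-- the discrete anharmonic-oscillator Hamiltonian `H_AO(γ)` with coupling parameter `γ`. -/
noncomputable def HAOg (N : ℕ) (γ : ℝ) : Matrix (Fin N) (Fin N) ℝ :=
  fun k l =>
    if (k : ℕ) = (l : ℕ) then -((N : ℝ) - 1 - 2 * (k : ℕ))
    else if (l : ℕ) = (k : ℕ) + 1 then
      Real.sqrt ((((N - 1 - (k : ℕ)) * ((k : ℕ) + 1) : ℕ)) * (1 - γ))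
    else if (k : ℕ) = (l : ℕ) + 1 then
      -Real.sqrt ((((N - 1 - (l : ℕ)) * ((l : ℕ) + 1) : ℕ)) * (1 - γ))
    else 0

/-- the exchange (parity) matrix `Π`. -/
noncomputable def PiMat (N : ℕ) : Matrix (Fin N) (Fin N) ℂ :=
  fun k l => if (k : ℕ) + (l : ℕ) = N - 1 then 1 else 0

section Tridiagonal

variable {R : Type*}

/-- The `N × N` tridiagonal matrix with diagonal `d`, superdiagonal `u` and subdiagonal `l`. All
three sequences are indexed by the row, so that `l 0` and `u (N - 1)` are not entries of the
matrix. -/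
def tridiagonal [Zero R] (N : ℕ) (d u l : ℕ → R) : Matrix (Fin N) (Fin N) R :=
  of fun i j =>
    if (i : ℕ) = j then d i
    else if (j : ℕ) = i + 1 then u i
    else if (i : ℕ) = j + 1 then l i
    else 0

lemma smul_tridiagonal [MulZeroClass R] (N : ℕ) (a : R) (d u l : ℕ → R) :
    a • tridiagonal N d u l = tridiagonal N (a • d) (a • u) (a • l) := by
  ext i j
  simp only [tridiagonal, Matrix.smul_apply, of_apply, Pi.smul_apply, smul_ite, smul_zero]

lemma tridiagonal_mul_diagonal [CommSemiring R] {N : ℕ} (d : ℕ → R) {u u' l l' c : ℕ → R}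
    (hu : ∀ k, k + 1 < N → u k * c (k + 1) = c k * u' k)
    (hl : ∀ k, k + 1 < N → l (k + 1) * c k = c (k + 1) * l' (k + 1)) :
    tridiagonal N d u l * diagonal (fun k : Fin N ↦ c k) =
      diagonal (fun k : Fin N ↦ c k) * tridiagonal N d u' l' := by
  ext ⟨i, hi⟩ ⟨j, hj⟩
  simp only [tridiagonal, mul_diagonal, diagonal_mul, of_apply]
  split_ifs with hd hup hlow
  · rw [hd, mul_comm]
  · subst hup
    exact hu i hj
  · subst hlow
    exact hl j hi
  · rw [zero_mul, mul_zero]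

lemma tridiagonal_mulVec_apply [NonUnitalNonAssocSemiring R] {n : ℕ} (d v : ℕ → R) {u l : ℕ → R}
    (hu : u n = 0) (hl : l 0 = 0) (i : Fin (n + 1)) :
    (tridiagonal (n + 1) d u l *ᵥ fun j ↦ v j) i =
      d i * v i + u i * v (i + 1) + l i * v (i - 1) := by
  obtain ⟨i, hi⟩ := i
  have hterm (j : Fin (n + 1)) : tridiagonal (n + 1) d u l ⟨i, hi⟩ j * v j =
      (if i = j then d i * v i else 0) + (if i + 1 = j then u i * v (i + 1) else 0) +
        (if i - 1 = j then l i * v (i - 1) else 0) := by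
    simp only [tridiagonal, of_apply, ite_mul, zero_mul]
    grind [zero_mul]
  have hupper : (if i + 1 < n + 1 then u i * v (i + 1) else 0) = u i * v (i + 1) := by
    grind [zero_mul]
  simp only [mulVec, dotProduct, hterm, sum_add_distrib]
  rw [Fin.sum_univ_eq_sum_range (fun j ↦ if i = j then d i * v i else 0),
    Fin.sum_univ_eq_sum_range (fun j ↦ if i + 1 = j then u i * v (i + 1) else 0),
    Fin.sum_univ_eq_sum_range (fun j ↦ if i - 1 = j then l i * v (i - 1) else 0)]
  simp only [sum_ite_eq, mem_range, hupper, hi, (Nat.sub_le i 1).trans_lt hi, if_true]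

lemma mul_tridiagonal_superdiagonal_apply [NonUnitalNonAssocSemiring R] {m : Type*} {n : ℕ}
    (M : Matrix m (Fin (n + 1)) R) (u : ℕ → R) (i : m) :
    (M * tridiagonal (n + 1) 0 u 0) i = Fin.cons 0 fun j : Fin n ↦ M i j.castSucc * u j := by
  ext j
  rw [Matrix.mul_apply]
  cases j using Fin.cases with
  | zero => simp [tridiagonal]
  | succ j =>
    rw [Fin.cons_succ, Finset.sum_eq_single j.castSucc]
    · simp [tridiagonal]
    · intro k _ hk
      simp [tridiagonal, show (j : ℕ) ≠ k from fun h ↦ hk (Fin.ext h.symm)]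
    · simp

end Tridiagonal

section Binomial

variable {R : Type*} [CommRing R]

lemma cast_choose_succ_mul (a q : ℕ) :
    (a.choose (q + 1) : R) * (q + 1) = (a.choose q : R) * (a - q) := by
  rcases le_or_gt q a with h | h
  · rw [← Nat.cast_sub h]
    exact_mod_cast congrArg (Nat.cast : ℕ → R) (Nat.choose_succ_right_eq a q)
  · simp [Nat.choose_eq_zero_of_lt h, Nat.choose_eq_zero_of_lt (h.trans q.lt_succ_self)]

lemma cast_mul_choose_pred (a q : ℕ) :
    (a : R) * ((a - 1).choose q : R) = (a - q) * (a.choose q : R) := by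
  rcases a with _ | a
  · rcases q with _ | q <;> simp
  rcases le_or_gt q (a + 1) with h | h
  · rw [← Nat.cast_sub h, Nat.add_sub_cancel]
    exact_mod_cast congrArg (Nat.cast : ℕ → R)
      (by simpa only [mul_comm] using Nat.choose_mul_succ_eq a q)
  · simp [Nat.choose_eq_zero_of_lt h, Nat.choose_eq_zero_of_lt (a.lt_succ_self.trans h)]

lemma choose_three_term_recurrence (a m q : ℕ) :
    -((a : R) - m) * (a.choose (q + 1) : R) + a * ((a - 1).choose (q + 1) : R)
      - m * ((a + 1).choose (q + 1) : R) = -((a : R) + m - q) * (a.choose q : R) := by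
  have hpascal : ((a + 1).choose (q + 1) : R) = a.choose q + a.choose (q + 1) := by
    rw [Nat.choose_succ_succ, Nat.cast_add]
  have habsorb := cast_mul_choose_pred (R := R) a (q + 1)
  push_cast at habsorb
  linear_combination habsorb - m * hpascal - cast_choose_succ_mul (R := R) a q

lemma pow_sub_mul_factorial_sub {n k : ℕ} (x : R) (hk : k < n) :
    x ^ (n - k) * ((n - k).factorial : R) =
      x * (n - k) * (x ^ (n - (k + 1)) * ((n - (k + 1)).factorial : R)) := by
  obtain ⟨m, rfl⟩ : ∃ m, n = m + 1 + k := ⟨n - k - 1, by omega⟩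
  simp only [Nat.add_sub_cancel, show m + 1 + k - (k + 1) = m by omega, Nat.factorial_succ]
  push_cast
  ring

end Binomial

lemma Pmat_apply (n : ℕ) (k q : Fin (n + 1)) :
    Pmat (n + 1) k q = ((n - k : ℕ).choose q : ℂ) := rfl

/-- The integer tridiagonal matrix `K` to which `H_ω` reduces, up to the factor `ω`, once the square
roots of binomial coefficients are removed by a diagonal conjugation. -/
noncomputable def integerHamiltonian (n : ℕ) : Matrix (Fin (n + 1)) (Fin (n + 1)) ℂ :=
  tridiagonal (n + 1) (fun k ↦ -((n : ℂ) - 2 * k)) (fun k ↦ (n : ℂ) - k) (fun k ↦ -(k : ℂ))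

/-- The superdiagonal matrix `L` with `L_{k,k+1} = -(n - k)`, the form of `K` in the basis of
columns of the Pascal matrix. -/
noncomputable def weightedShift (n : ℕ) : Matrix (Fin (n + 1)) (Fin (n + 1)) ℂ :=
  tridiagonal (n + 1) 0 (fun k ↦ -((n : ℂ) - k)) 0

lemma integerHamiltonian_mul_Pmat (n : ℕ) :
    integerHamiltonian n * Pmat (n + 1) = Pmat (n + 1) * weightedShift n := by
  ext k q
  have hK : (integerHamiltonian n * Pmat (n + 1)) k q =
      -((n : ℂ) - 2 * k) * ((n - k : ℕ).choose q : ℂ)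
        + ((n : ℂ) - k) * ((n - (k + 1) : ℕ).choose q : ℂ)
        + -(k : ℂ) * ((n - (k - 1) : ℕ).choose q : ℂ) :=
    tridiagonal_mulVec_apply _ (fun j ↦ ((n - j).choose q : ℂ)) (sub_self _) (by simp) k
  obtain ⟨k, hk⟩ := k
  obtain ⟨a, rfl⟩ : ∃ a, n = a + k := ⟨n - k, by omega⟩
  have hlow : (k : ℂ) * ((a + k - (k - 1)).choose q : ℂ) = k * ((a + 1).choose q : ℂ) := by
    rcases k with _ | k
    · simp
    · rw [show a + (k + 1) - (k + 1 - 1) = a + 1 by omega]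
  rw [hK, weightedShift, mul_tridiagonal_superdiagonal_apply]
  simp only [neg_mul, hlow, Nat.add_sub_cancel, show a + k - (k + 1) = a - 1 by omega]
  cases q using Fin.cases with
  | zero =>
    simp only [Fin.cons_zero, Fin.val_zero, Nat.choose_zero_right]
    push_cast
    ring
  | succ q =>
    simp only [Fin.cons_succ, Pmat_apply, Fin.val_succ, Fin.val_castSucc, Nat.add_sub_cancel]
    push_cast
    linear_combination choose_three_term_recurrence (R := ℂ) a k q

lemma isUnit_Pmat (n : ℕ) : IsUnit (Pmat (n + 1)) := by
  set M := (Pmat (n + 1)).submatrix Fin.revPerm (Equiv.refl _) with hM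
  have hentry (i j : Fin (n + 1)) : M i j = ((i : ℕ).choose j : ℂ) := by
    simp only [hM, submatrix_apply, Pmat_apply, Fin.revPerm_apply, Fin.val_rev, Equiv.refl_apply]
    congr 2
    omega
  have htriangular : M.IsLowerTriangular := fun i j hij ↦ by
    rw [hentry, Nat.choose_eq_zero_of_lt (by simpa using hij), Nat.cast_zero]
  have hdet : M.det = 1 := by
    simp only [det_of_isLowerTriangular M htriangular, hentry, Nat.choose_self, Nat.cast_one,
      prod_const_one]
  rw [← isUnit_submatrix_equiv Fin.revPerm (Equiv.refl _), isUnit_iff_isUnit_det, hdet]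
  exact isUnit_one

lemma sqrt_mul_mul_sqrt_of_mul_eq {x y a b : ℝ} (hx : 0 ≤ x) (hy : 0 ≤ y)
    (h : y * b = x * a) : √(x * y) * √b = x * √a := by
  rw [← Real.sqrt_mul (mul_nonneg hx hy), mul_assoc, h, ← mul_assoc,
    Real.sqrt_mul (mul_self_nonneg x), Real.sqrt_mul_self hx]

lemma gCoup_eq_sqrt {n k : ℕ} (hk : k ≤ n) :
    gCoup (n + 1) k = √(((n : ℝ) - k) * (k + 1)) := by
  rw [gCoup, Nat.add_sub_cancel, Nat.cast_mul, Nat.cast_sub hk, Nat.cast_succ]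

lemma gCoup_mul_sqrt_choose_succ {n k : ℕ} (hk : k ≤ n) :
    gCoup (n + 1) k * √(n.choose (k + 1)) = ((n : ℝ) - k) * √(n.choose k) := by
  rw [gCoup_eq_sqrt hk]
  refine sqrt_mul_mul_sqrt_of_mul_eq (sub_nonneg.2 (Nat.cast_le.2 hk)) (by positivity) ?_
  linear_combination cast_choose_succ_mul (R := ℝ) n k

lemma gCoup_mul_sqrt_choose {n k : ℕ} (hk : k ≤ n) :
    gCoup (n + 1) k * √(n.choose k) = ((k : ℝ) + 1) * √(n.choose (k + 1)) := by
  rw [gCoup_eq_sqrt hk, mul_comm ((n : ℝ) - k)]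
  refine sqrt_mul_mul_sqrt_of_mul_eq (by positivity) (sub_nonneg.2 (Nat.cast_le.2 hk)) ?_
  linear_combination -cast_choose_succ_mul (R := ℝ) n k

/-- The family `H_ω` of exceptional-point Hamiltonians, with `H_i = H_BH(1)` and `H_1 = H_AO`. -/
noncomputable def epHamiltonian (n : ℕ) (ω : ℂ) : Matrix (Fin (n + 1)) (Fin (n + 1)) ℂ :=
  tridiagonal (n + 1) (fun k ↦ -ω * ((n : ℂ) - 2 * k)) (fun k ↦ gCoup (n + 1) k)
    (fun k ↦ -ω ^ 2 * gCoup (n + 1) (k - 1))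

/-- The left diagonal factor of `Q_ω`, which becomes `D` for `ω = i` and `C` for `ω = 1`. -/
noncomputable def leftFactor (n : ℕ) (ω : ℂ) : Matrix (Fin (n + 1)) (Fin (n + 1)) ℂ :=
  diagonal fun k ↦ ω ^ (k : ℕ) * (√(n.choose k) : ℂ)

/-- The right diagonal factor of `Q_ω`, which becomes `G` for `ω = i` and `F` for `ω = 1`. -/
noncomputable def rightFactor (n : ℕ) (ω : ℂ) : Matrix (Fin (n + 1)) (Fin (n + 1)) ℂ :=
  diagonal fun k ↦ (-ω) ^ (n - k : ℕ) * ((n - k : ℕ).factorial : ℂ)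

/-- The family `Q_ω` of transition matrices, with `Q_i = Q_BH` and `Q_1 = Q_AO`. -/
noncomputable def epTransition (n : ℕ) (ω : ℂ) : Matrix (Fin (n + 1)) (Fin (n + 1)) ℂ :=
  leftFactor n ω * Pmat (n + 1) * rightFactor n ω

lemma HBH_one_eq_epHamiltonian (n : ℕ) : HBH (n + 1) 1 = epHamiltonian n Complex.I := by
  ext i j
  simp only [HBH, epHamiltonian, tridiagonal, of_apply]
  split_ifs with hd hu hl
  · push_cast
    ring
  · rfl
  · simp [hl]
  · rfl

lemma HAO_eq_epHamiltonian (n : ℕ) : HAO (n + 1) = epHamiltonian n 1 := by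
  ext i j
  simp only [HAO, epHamiltonian, tridiagonal, of_apply]
  split_ifs with hd hu hl
  · push_cast
    ring
  · rfl
  · simp [hl]
  · rfl

lemma QBH_eq_epTransition (n : ℕ) : QBH (n + 1) = epTransition n Complex.I := rfl

lemma QAO_eq_epTransition (n : ℕ) : QAO (n + 1) = epTransition n 1 := by
  simp only [QAO, Cmat, Fmat, epTransition, leftFactor, rightFactor, one_pow, one_mul,
    Nat.add_sub_cancel]

lemma epHamiltonian_mul_leftFactor (n : ℕ) (ω : ℂ) :
    epHamiltonian n ω * leftFactor n ω = leftFactor n ω * (ω • integerHamiltonian n) := by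
  have hd : (ω • fun k : ℕ ↦ -((n : ℂ) - 2 * k)) = fun k : ℕ ↦ -ω * ((n : ℂ) - 2 * k) := by
    ext k
    simp only [Pi.smul_apply, smul_eq_mul]
    ring
  rw [integerHamiltonian, smul_tridiagonal, hd]
  refine tridiagonal_mul_diagonal (c := fun k ↦ ω ^ k * (√(n.choose k) : ℂ)) _
    (fun k hk ↦ ?_) (fun k hk ↦ ?_)
  · have hg : (gCoup (n + 1) k * √(n.choose (k + 1)) : ℂ) = (n - k) * √(n.choose k) := by
      exact_mod_cast gCoup_mul_sqrt_choose_succ (by omega : k ≤ n)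
    simp only [Pi.smul_apply, smul_eq_mul]
    linear_combination ω ^ (k + 1) * hg
  · have hg : (gCoup (n + 1) k * √(n.choose k) : ℂ) = (k + 1) * √(n.choose (k + 1)) := by
      exact_mod_cast gCoup_mul_sqrt_choose (by omega : k ≤ n)
    simp only [Pi.smul_apply, smul_eq_mul, Nat.add_sub_cancel]
    push_cast
    linear_combination -ω ^ (k + 2) * hg

lemma Jmat_eq_tridiagonal (N : ℕ) : Jmat N = tridiagonal N 0 1 0 := by
  ext i j
  simp only [Jmat, tridiagonal, of_apply, Pi.zero_apply, Pi.one_apply]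
  grind

lemma smul_weightedShift_mul_rightFactor (n : ℕ) (ω : ℂ) :
    (ω • weightedShift n) * rightFactor n ω = rightFactor n ω * Jmat (n + 1) := by
  rw [weightedShift, smul_tridiagonal, Jmat_eq_tridiagonal, smul_zero]
  refine tridiagonal_mul_diagonal (c := fun k ↦ (-ω) ^ (n - k) * ((n - k).factorial : ℂ)) _
    (fun k hk ↦ ?_) (fun k _ ↦ ?_)
  · rw [pow_sub_mul_factorial_sub (-ω) (Nat.lt_of_succ_lt_succ hk)]
    simp only [Pi.smul_apply, smul_eq_mul, Pi.one_apply]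
    ring
  · simp only [Pi.zero_apply, zero_mul, mul_zero]

lemma epHamiltonian_mul_epTransition (n : ℕ) (ω : ℂ) :
    epHamiltonian n ω * epTransition n ω = epTransition n ω * Jmat (n + 1) := by
  simp only [epTransition]
  calc epHamiltonian n ω * (leftFactor n ω * Pmat (n + 1) * rightFactor n ω)
      = epHamiltonian n ω * leftFactor n ω * Pmat (n + 1) * rightFactor n ω := by
        simp only [Matrix.mul_assoc]
    _ = leftFactor n ω * (ω • (integerHamiltonian n * Pmat (n + 1))) * rightFactor n ω := by
        rw [epHamiltonian_mul_leftFactor, Matrix.mul_assoc (leftFactor n ω), Matrix.smul_mul]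
    _ = leftFactor n ω * Pmat (n + 1) * ((ω • weightedShift n) * rightFactor n ω) := by
        rw [integerHamiltonian_mul_Pmat, ← Matrix.mul_smul]
        simp only [Matrix.mul_assoc]
    _ = leftFactor n ω * Pmat (n + 1) * rightFactor n ω * Jmat (n + 1) := by
        rw [smul_weightedShift_mul_rightFactor, ← Matrix.mul_assoc]

lemma isUnit_leftFactor (n : ℕ) {ω : ℂ} (hω : ω ≠ 0) : IsUnit (leftFactor n ω) := by
  refine isUnit_diagonal.2 (Pi.isUnit_iff.2 fun k ↦ (pow_ne_zero _ hω).isUnit.mul ?_)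
  have hpos : 0 < √(n.choose k : ℝ) :=
    Real.sqrt_pos.2 (Nat.cast_pos.2 (Nat.choose_pos (Nat.le_of_lt_succ k.isLt)))
  exact (Complex.ofReal_ne_zero.2 hpos.ne').isUnit

lemma isUnit_rightFactor (n : ℕ) {ω : ℂ} (hω : ω ≠ 0) : IsUnit (rightFactor n ω) :=
  isUnit_diagonal.2 <| Pi.isUnit_iff.2 fun _ ↦ (pow_ne_zero _ (neg_ne_zero.2 hω)).isUnit.mul
    (Nat.cast_ne_zero.2 (Nat.factorial_ne_zero _)).isUnit

lemma isUnit_epTransition (n : ℕ) {ω : ℂ} (hω : ω ≠ 0) : IsUnit (epTransition n ω) :=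
  ((isUnit_leftFactor n hω).mul (isUnit_Pmat n)).mul (isUnit_rightFactor n hω)

lemma inv_mul_epHamiltonian_mul_epTransition (n : ℕ) {ω : ℂ} (hω : ω ≠ 0) :
    (epTransition n ω)⁻¹ * epHamiltonian n ω * epTransition n ω = Jmat (n + 1) := by
  rw [Matrix.mul_assoc, epHamiltonian_mul_epTransition,
    nonsing_inv_mul_cancel_left _ _ ((isUnit_iff_isUnit_det _).1 (isUnit_epTransition n hω))]

/-- the exceptional-point matching identity
`Q_BH⁻¹ · H_BH(1) · Q_BH = Q_AO⁻¹ · H_AO · Q_AO`. -/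
theorem ep_matching (N : ℕ) (hN : 1 ≤ N) :
    (QBH N)⁻¹ * HBH N 1 * QBH N = (QAO N)⁻¹ * HAO N * QAO N := by
  obtain ⟨n, rfl⟩ := Nat.exists_eq_add_of_le' hN
  rw [HBH_one_eq_epHamiltonian, QBH_eq_epTransition, HAO_eq_epHamiltonian, QAO_eq_epTransition,
    inv_mul_epHamiltonian_mul_epTransition n Complex.I_ne_zero,
    inv_mul_epHamiltonian_mul_epTransition n one_ne_zero]
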